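/- Let X be a topological space and XI its Alexandroff Noodles. Then the composition map (f, g) ↦ f ∘ g from Hom_p(XI) × Hom_p(XI) to Hom_p(XI) is continuous. -/

import Mathlib

open Topology unitInterval

/-- The canonical projection sending `Sum.inl x` to `(x, 0)` and `Sum.inr p` to `p`;
its kernel is exactly the equivalence relation identifying each `x ∈ X` with `(x, 0)`. -/
def noodleProj (X : Type*) : X ⊕ (X × unitInterval) → X × unitInterval
  | Sum.inl x => (x, 0)
  | Sum.inr p => p

/-- The equivalence relation on `X ⊕ (X × [0,1])` identifying each `x ∈ X` with `(x, 0)`. -/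
def noodleSetoid (X : Type*) : Setoid (X ⊕ (X × unitInterval)) := Setoid.ker (noodleProj X)

/-- The Alexandroff Noodles of `X`: the quotient of the sum of `X` and `D × [0,1]`
(`D` the underlying set of `X`) identifying each `x ∈ X` with `(x, 0)`. -/
def Noodles (X : Type*) : Type _ := Quotient (noodleSetoid X)

/-- The topology of the sum of `X` and `D × [0,1]`, where `D` is the underlying set of `X`
with the discrete topology. -/
def noodleSumTop (X : Type*) [t : TopologicalSpace X] :
    TopologicalSpace (X ⊕ (X × unitInterval)) :=
  @instTopologicalSpaceSum X (X × unitInterval) t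
    (@instTopologicalSpaceProd X unitInterval ⊥ inferInstance)

/-- The Alexandroff Noodles carry the quotient topology. -/
instance noodlesTop (X : Type*) [TopologicalSpace X] : TopologicalSpace (Noodles X) :=
  (noodleSumTop X).coinduced (Quotient.mk (noodleSetoid X))

/-- The point `r_x` of the Alexandroff Noodles, for `x ∈ X` and `r ∈ [0,1]`
(so `0_x` is `noodlePt x 0`, the common image of `x` and `(x, 0)`). -/
def noodlePt {X : Type*} (x : X) (r : unitInterval) : Noodles X :=
  Quotient.mk (noodleSetoid X) (Sum.inr (x, r))

/-- The topology of pointwise convergence on the group of self-homeomorphisms of `X`,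
induced by the inclusion of `Hom(X)` into the product space `X → X`. -/
def homPTop (X : Type*) [TopologicalSpace X] : TopologicalSpace (X ≃ₜ X) :=
  TopologicalSpace.induced (fun f => (f : X → X)) inferInstance

namespace NoodleAux

variable {X : Type*}

theorem mk_inl (x : X) : Quotient.mk (noodleSetoid X) (Sum.inl x) = noodlePt x 0 :=
  Quotient.sound (s := noodleSetoid X) (show noodleProj X _ = noodleProj X _ from rfl)

theorem pt_inj {x y : X} {r s : unitInterval} (h : noodlePt x r = noodlePt y s) :
    x = y ∧ r = s := by
  have h1 : noodleProj X (Sum.inr (x, r)) = noodleProj X (Sum.inr (y, s)) :=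
    Quotient.exact (s := noodleSetoid X) h
  exact Prod.mk.inj h1

theorem pt_surj (p : Noodles X) : ∃ x r, p = noodlePt x r := by
  refine Quotient.inductionOn p ?_
  rintro (x | ⟨x, r⟩)
  · exact ⟨x, 0, mk_inl x⟩
  · exact ⟨x, r, rfl⟩

theorem pt_iff {x y : X} {r s : unitInterval} :
    noodlePt x r = noodlePt y s ↔ x = y ∧ r = s :=
  ⟨pt_inj, by rintro ⟨rfl, rfl⟩; rfl⟩

variable [TopologicalSpace X]

theorem isOpen_iff' (U : Set (Noodles X)) :
    IsOpen U ↔ IsOpen {x : X | noodlePt x 0 ∈ U} ∧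
      ∀ x : X, IsOpen {r : unitInterval | noodlePt x r ∈ U} := by
  have e : {x : X | noodlePt x 0 ∈ U} =
      Sum.inl ⁻¹' (Quotient.mk (noodleSetoid X) ⁻¹' U) := by
    ext x
    show _ ↔ Quotient.mk (noodleSetoid X) (Sum.inl x) ∈ U
    rw [mk_inl]; rfl
  rw [e]
  refine (@isOpen_sum_iff X (X × unitInterval) _ (@instTopologicalSpaceProd X unitInterval ⊥ _)
    (Quotient.mk (noodleSetoid X) ⁻¹' U)).trans (and_congr Iff.rfl ?_)
  letI : TopologicalSpace X := ⊥
  haveI : DiscreteTopology X := ⟨rfl⟩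
  constructor
  · intro h x
    exact h.preimage (Continuous.prodMk_right x)
  · intro h
    rw [isOpen_iff_mem_nhds]
    rintro ⟨x, r⟩ hr
    rw [nhds_prod_eq, nhds_discrete, Filter.mem_prod_iff]
    refine ⟨{x}, Filter.mem_pure.2 rfl, _, (h x).mem_nhds hr, ?_⟩
    rintro ⟨x', r'⟩ ⟨h1, h2⟩
    obtain rfl : x' = x := h1
    exact h2

theorem continuous_pt (x : X) : Continuous (fun r : unitInterval => noodlePt x r) :=
  ⟨fun U hU => ((isOpen_iff' U).1 hU).2 x⟩

/-- piece of a noodle -/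
def seg (x : X) (J : Set unitInterval) : Set (Noodles X) := (fun r => noodlePt x r) '' J

theorem mem_seg {x y : X} {J : Set unitInterval} {r : unitInterval} :
    noodlePt y r ∈ seg x J ↔ y = x ∧ r ∈ J := by
  constructor
  · rintro ⟨s, hs, h⟩
    obtain ⟨rfl, rfl⟩ := pt_inj h
    exact ⟨rfl, hs⟩
  · rintro ⟨rfl, h⟩
    exact ⟨r, h, rfl⟩

theorem isOpen_seg {x : X} {J : Set unitInterval} (hJ : IsOpen J)
    (h : 0 ∈ J → IsOpen ({x} : Set X)) : IsOpen (seg x J) := by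
  rw [isOpen_iff']
  simp only [mem_seg]
  constructor
  · by_cases h0 : (0 : unitInterval) ∈ J
    · simpa [h0] using h h0
    · simp [h0]
  · intro y
    by_cases hy : y = x
    · simpa [hy] using hJ
    · simp [hy]

theorem isClosed_seg {x : X} {J : Set unitInterval} (hJ : IsClosed J)
    (h : 0 ∉ J) : IsClosed (seg x J) := by
  rw [← isOpen_compl_iff, isOpen_iff']
  simp only [Set.mem_compl_iff, mem_seg]
  constructor
  · simp [h]
  · intro y
    by_cases hy : y = x
    · simp only [hy, true_and]
      exact hJ.isOpen_compl
    · simp [hy]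

theorem preconn_seg (x : X) {J : Set unitInterval} (hJ : IsPreconnected J) :
    IsPreconnected (seg x J) :=
  hJ.image _ (continuous_pt x).continuousOn

theorem sep {C : Set (Noodles X)} (hC : IsPreconnected C) {u : X} {q t : unitInterval}
    (hq : noodlePt u q ∈ C) {p : Noodles X} (hp : p ∈ C) (hp' : p ∉ seg u (Set.Ici t))
    (ht : 0 < t) (htq : t ≤ q) : noodlePt u t ∈ C := by
  by_contra hn
  have hlt : t < q := by
    rcases htq.eq_or_lt with h | h
    · subst h; exact absurd hq hn
    · exact h
  have h1 : IsOpen (seg u (Set.Ioi t)) :=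
    isOpen_seg isOpen_Ioi (fun h => absurd h (not_lt.2 ht.le))
  have h2 : IsOpen (seg u (Set.Ici t))ᶜ :=
    (isClosed_seg isClosed_Ici (fun h => absurd ht (not_lt.2 h))).isOpen_compl
  obtain ⟨w, -, hw1, hw2⟩ := hC _ _ h1 h2 (by
    intro w hw
    by_cases hw' : w ∈ seg u (Set.Ici t)
    · left
      obtain ⟨s, hs, rfl⟩ := hw'
      refine ⟨s, Set.mem_Ioi.2 (lt_of_le_of_ne hs ?_), rfl⟩
      rintro rfl
      exact hn hw
    · right; exact hw') ⟨_, hq, mem_seg.2 ⟨rfl, hlt⟩⟩ ⟨p, hp, hp'⟩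
  exact hw2 (Set.image_mono Set.Ioi_subset_Ici_self hw1)

theorem between {C : Set (Noodles X)} (hC : IsPreconnected C) {u : X} {p q t : unitInterval}
    (hp : noodlePt u p ∈ C) (hq : noodlePt u q ∈ C) (h1 : p ≤ t) (h2 : t ≤ q) :
    noodlePt u t ∈ C := by
  rcases h1.eq_or_lt with rfl | h
  · exact hp
  · refine sep hC hq hp ?_ (lt_of_le_of_lt (unitInterval.nonneg p) h) h2
    rw [mem_seg]
    rintro ⟨-, h'⟩
    exact absurd h (not_lt.2 h')

/-- base projection -/
noncomputable def base (p : Noodles X) : X := (pt_surj p).choose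

theorem base_pt (x : X) (r : unitInterval) : base (noodlePt x r) = x := by
  have := (pt_surj (noodlePt x r)).choose_spec
  obtain ⟨s, hs⟩ := this
  exact (pt_inj hs).1.symm

/-- retraction to height zero -/
noncomputable def ret (p : Noodles X) : Noodles X := noodlePt (base p) 0

theorem ret_pt (x : X) (r : unitInterval) : ret (noodlePt x r) = noodlePt x 0 := by
  rw [ret, base_pt]

theorem continuous_ret : Continuous (ret : Noodles X → Noodles X) := by
  refine ⟨fun U hU => ?_⟩
  rw [isOpen_iff']
  simp only [Set.mem_preimage, ret_pt]
  exact ⟨((isOpen_iff' U).1 hU).1, fun x => isOpen_const⟩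

theorem exists_pos {U : Set (Noodles X)} (hU : IsOpen U) {u : X} (h : noodlePt u 0 ∈ U) :
    ∃ e : unitInterval, 0 < e ∧ noodlePt u e ∈ U := by
  have h1 : {r : unitInterval | noodlePt u r ∈ U} ∈ 𝓝 (0 : unitInterval) :=
    (((isOpen_iff' U).1 hU).2 u).mem_nhds h
  obtain ⟨e, he, h2⟩ := exists_Ico_subset_of_mem_nhds h1 ⟨1, zero_lt_one⟩
  obtain ⟨d, hd, hde⟩ := exists_between he
  exact ⟨d, hd, h2 ⟨hd.le, hde⟩⟩

theorem uniq_lt (f : Noodles X ≃ₜ Noodles X) {x y z : X} {r t : unitInterval} (ht : 0 < t)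
    (hf : f (noodlePt x r) = noodlePt y 0) (hf' : f (noodlePt x t) = noodlePt z 0) :
    ¬ t < r := by
  intro hlt
  set S := f '' seg x (Set.Icc t r) with hS
  have hSc : IsClosed S :=
    f.isClosedMap _ (isClosed_seg isClosed_Icc (fun h => absurd ht (not_lt.2 h.1)))
  have hSp : IsPreconnected S :=
    (preconn_seg x isPreconnected_Icc).image _ f.continuous.continuousOn
  have hyS : noodlePt y 0 ∈ S := ⟨_, mem_seg.2 ⟨rfl, hlt.le, le_rfl⟩, hf⟩
  have hzS : noodlePt z 0 ∈ S := ⟨_, mem_seg.2 ⟨rfl, le_rfl, hlt.le⟩, hf'⟩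
  have hyR : noodlePt y 0 ∈ ret '' S := ⟨_, hyS, ret_pt _ _⟩
  have hzR : noodlePt z 0 ∈ ret '' S := ⟨_, hzS, ret_pt _ _⟩
  have hR : IsPreconnected (f.symm '' (ret '' S)) :=
    (hSp.image _ continuous_ret.continuousOn).image _ f.symm.continuous.continuousOn
  have key : ∀ m, t ≤ m → m ≤ r → f (noodlePt x m) ∈ ret '' S := by
    intro m h1 h2
    have : noodlePt x m ∈ f.symm '' (ret '' S) := by
      refine between hR (p := t) (q := r) ⟨_, hzR, ?_⟩ ⟨_, hyR, ?_⟩ h1 h2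
      · rw [← hf']; simp
      · rw [← hf]; simp
    obtain ⟨w, hw, hw'⟩ := this
    rw [← hw']; simpa using hw
  have hO : IsOpen (f '' seg x (Set.Ioo t r)) :=
    f.isOpenMap _ (isOpen_seg isOpen_Ioo (fun h => absurd ht (not_lt.2 h.1.le)))
  obtain ⟨m, hm1, hm2⟩ := exists_between hlt
  obtain ⟨w, -, hw⟩ := key m hm1.le hm2.le
  have h0 : noodlePt (base w) 0 ∈ f '' seg x (Set.Ioo t r) :=
    ⟨_, mem_seg.2 ⟨rfl, hm1, hm2⟩, hw.symm⟩
  obtain ⟨e, he, h1⟩ := exists_pos hO h0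
  obtain ⟨_, ⟨m', hm', rfl⟩, h2⟩ := h1
  obtain ⟨w', -, hw'⟩ := key m' hm'.1.le hm'.2.le
  rw [h2] at hw'
  exact he.ne (pt_inj hw').2

theorem uniq (f : Noodles X ≃ₜ Noodles X) {x y z : X} {r t : unitInterval} (hr : 0 < r)
    (ht : 0 < t)
    (hf : f (noodlePt x r) = noodlePt y 0) (hf' : f (noodlePt x t) = noodlePt z 0) :
    t = r :=
  le_antisymm (not_lt.1 (uniq_lt f hr hf' hf)) (not_lt.1 (uniq_lt f ht hf hf'))

/-- arc-like points -/
def Arc (X : Type*) [TopologicalSpace X] : Set (Noodles X) :=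
  {p | ∀ x, p = noodlePt x 0 → IsOpen ({x} : Set X)}

theorem arc_pt {x : X} {r : unitInterval} :
    noodlePt x r ∈ Arc X ↔ (r = 0 → IsOpen ({x} : Set X)) := by
  constructor
  · rintro h rfl
    exact h x rfl
  · intro h y hy
    obtain ⟨rfl, h'⟩ := pt_inj hy
    exact h h'

theorem open_of_seg (f : Noodles X ≃ₜ Noodles X) {x y : X} {J : Set unitInterval}
    (hJ : IsOpen (seg x J)) {r : unitInterval} (hr : r ∈ J)
    (hf : f (noodlePt x r) = noodlePt y 0)
    (hu : ∀ t ∈ J, ∀ z, f (noodlePt x t) = noodlePt z 0 → t = r) : IsOpen ({y} : Set X) := by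
  have h := ((isOpen_iff' _).1 (f.isOpenMap _ hJ)).1
  convert h using 1
  ext z
  constructor
  · rintro rfl
    exact ⟨_, mem_seg.2 ⟨rfl, hr⟩, hf⟩
  · rintro ⟨_, ⟨t, ht, rfl⟩, h2⟩
    have := hu t ht z h2
    subst this
    exact (pt_inj (h2.symm.trans hf)).1

theorem arc_map (f : Noodles X ≃ₜ Noodles X) {p : Noodles X} (hp : p ∈ Arc X) :
    f p ∈ Arc X := by
  intro y hy
  obtain ⟨x, r, rfl⟩ := pt_surj p
  rw [arc_pt] at hp
  by_cases hr : r = 0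
  · subst hr
    have hx := hp rfl
    by_cases h : ∃ t : unitInterval, 0 < t ∧ ∃ z, f (noodlePt x t) = noodlePt z 0
    · obtain ⟨t, ht, z, hz⟩ := h
      refine open_of_seg f (J := Set.Iio t) (isOpen_seg isOpen_Iio (fun _ => hx)) ht hy ?_
      intro s hs w hw
      by_contra hs0
      have := uniq f ht (lt_of_le_of_ne (unitInterval.nonneg s) (Ne.symm hs0)) hz hw
      rw [this] at hs
      exact lt_irrefl _ (Set.mem_Iio.1 hs)
    · refine open_of_seg f (J := Set.univ) (isOpen_seg isOpen_univ (fun _ => hx)) trivial hy ?_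
      intro s _ w hw
      by_contra hs0
      exact h ⟨s, lt_of_le_of_ne (unitInterval.nonneg s) (Ne.symm hs0), w, hw⟩
  · have hr' : 0 < r := lt_of_le_of_ne (unitInterval.nonneg r) (Ne.symm hr)
    refine open_of_seg f (J := Set.Ioi 0)
      (isOpen_seg isOpen_Ioi (fun h => absurd (Set.mem_Ioi.1 h) (lt_irrefl _))) hr' hy ?_
    intro s hs w hw
    exact uniq f hr' hs hy hw

theorem piece {z : X} (hz : ¬ IsOpen ({z} : Set X)) {C : Set (Noodles X)}
    (hC : IsPreconnected C) (hA : C ⊆ Arc X) {p : Noodles X} (hp : p ∈ C)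
    (hp' : p ∈ seg z (Set.Ioi 0)) : C ⊆ seg z (Set.Ioi 0) := by
  have h1 : IsOpen (seg z (Set.Ioi 0)) :=
    isOpen_seg isOpen_Ioi (fun h => absurd (Set.mem_Ioi.1 h) (lt_irrefl _))
  have h2 : IsOpen (Arc X \ seg z (Set.Ioi 0)) := by
    rw [isOpen_iff']
    simp only [Set.mem_diff, mem_seg, arc_pt]
    constructor
    · rw [isOpen_iff_forall_mem_open]
      rintro x ⟨hx, -⟩
      refine ⟨{x}, ?_, hx trivial, rfl⟩
      rintro _ rfl
      exact ⟨hx, by simp⟩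
    · intro x
      by_cases hxz : x = z
      · subst hxz
        convert isOpen_empty
        ext r
        simp only [Set.mem_ofPred_eq, Set.mem_empty_iff_false, iff_false, hz, true_and, not_and,
          not_not]
        intro hr
        exact Set.mem_Ioi.2 (lt_of_le_of_ne (unitInterval.nonneg r) (fun h => hr h.symm))
      · by_cases hx : IsOpen ({x} : Set X)
        · simp [hx, hxz]
        · simp only [hx, hxz, false_and, not_false_eq_true, and_true, imp_false]
          exact isOpen_ne
  refine hC.subset_left_of_subset_union h1 h2 Set.disjoint_sdiff_right ?_ ⟨p, hp, hp'⟩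
  intro w hw
  by_cases h : w ∈ seg z (Set.Ioi 0)
  · exact Or.inl h
  · exact Or.inr ⟨hA hw, h⟩

theorem piece_map {z : X} (hz : ¬ IsOpen ({z} : Set X)) (k : Noodles X ≃ₜ Noodles X)
    {p : Noodles X} (hp : p ∈ seg z (Set.Ioi 0)) (hkp : k p ∈ seg z (Set.Ioi 0)) :
    ∀ q ∈ seg z (Set.Ioi 0), k q ∈ seg z (Set.Ioi 0) := by
  intro q hq
  refine piece hz (C := k '' seg z (Set.Ioi 0))
    ((preconn_seg z isPreconnected_Ioi).image _ k.continuous.continuousOn) ?_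
    ⟨p, hp, rfl⟩ hkp ⟨q, hq, rfl⟩
  rintro _ ⟨_, ⟨r, hr, rfl⟩, rfl⟩
  exact arc_map k (arc_pt.2 fun h => absurd h (Set.mem_Ioi.1 hr).ne')

theorem spec {z : X} (hz : ¬ IsOpen ({z} : Set X)) (k : Noodles X ≃ₜ Noodles X)
    {p : Noodles X} (hp : p ∈ seg z (Set.Ioi 0)) (hkp : k p ∈ seg z (Set.Ioi 0))
    {O : Set (Noodles X)} (hO : IsOpen O) (h : k (noodlePt z 0) ∈ O) : noodlePt z 0 ∈ O := by
  have hna : k (noodlePt z 0) ∉ Arc X := by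
    intro ha
    have := arc_map k.symm ha
    rw [k.symm_apply_apply, arc_pt] at this
    exact hz (this rfl)
  have hret : ret (k (noodlePt z 0)) = k (noodlePt z 0) := by
    obtain ⟨u, r, hu⟩ := pt_surj (k (noodlePt z 0))
    rw [hu, arc_pt] at hna
    push Not at hna
    rw [hu, ret_pt, hna.1]
  have hO' : IsOpen (k ⁻¹' (ret ⁻¹' O)) := (hO.preimage continuous_ret).preimage k.continuous
  obtain ⟨e, he, h1⟩ := exists_pos hO' (u := z) (by
    show ret (k _) ∈ O
    rwa [hret])
  obtain ⟨s, hs, h2⟩ := piece_map hz k hp hkp _ (mem_seg.2 ⟨rfl, he⟩)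
  change ret (k _) ∈ O at h1
  rw [← h2] at h1
  simpa [ret_pt] using h1

theorem nbhd {x : X} {r : unitInterval} (h : noodlePt x r ∈ Arc X) {W : Set (Noodles X)}
    (hW : IsOpen W) (hr : noodlePt x r ∈ W) :
    ∃ c d : unitInterval, c ≤ d ∧ seg x (Set.Icc c d) ⊆ W ∧
      ∃ O : Set (Noodles X), IsOpen O ∧ noodlePt x r ∈ O ∧ O ⊆ seg x (Set.Icc c d) := by
  have h1 : {t : unitInterval | noodlePt x t ∈ W ∧ (t = 0 → IsOpen ({x} : Set X))} ∈ 𝓝 r := by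
    refine Filter.inter_mem ((((isOpen_iff' W).1 hW).2 x).mem_nhds hr) ?_
    by_cases hx : IsOpen ({x} : Set X)
    · exact Filter.Eventually.of_forall fun _ _ => hx
    · rw [arc_pt] at h
      have : r ≠ 0 := fun h' => hx (h h')
      filter_upwards [isOpen_ne.mem_nhds this] with t ht h'
      exact absurd h' ht
  obtain ⟨c, d, hm, hn, hs⟩ := exists_Icc_mem_subset_of_mem_nhds h1
  refine ⟨c, d, hm.1.trans hm.2, ?_, seg x (interior (Set.Icc c d)), ?_, ?_, ?_⟩
  · rintro _ ⟨t, ht, rfl⟩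
    exact (hs ht).1
  · exact isOpen_seg isOpen_interior (fun h0 => (hs (interior_subset h0)).2 rfl)
  · exact mem_seg.2 ⟨rfl, mem_interior_iff_mem_nhds.2 hn⟩
  · exact Set.image_mono interior_subset

theorem eval_mem {Y : Type*} [TopologicalSpace Y] (f : Y ≃ₜ Y) (y : Y) {O : Set Y}
    (hO : IsOpen O) (h : f y ∈ O) : ∀ᶠ g in @nhds _ (homPTop Y) f, (g : Y ≃ₜ Y) y ∈ O := by
  letI := homPTop Y
  have h1 : Continuous (fun g : Y ≃ₜ Y => (g : Y → Y)) := continuous_induced_dom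
  have h2 : Continuous (fun g : Y ≃ₜ Y => g y) := (continuous_apply y).comp h1
  exact h2.continuousAt.eventually_mem (hO.mem_nhds h)

end NoodleAux

open NoodleAux in
/-- For any topological space `X`, composition `(f, g) ↦ f ∘ g` is continuous from
`Hom_p(XI) × Hom_p(XI)` to `Hom_p(XI)`, where `XI` is the Alexandroff Noodles of `X`. -/
theorem noodles_composition_continuous (X : Type*) [TopologicalSpace X] :
    Continuous[@instTopologicalSpaceProd _ _ (homPTop (Noodles X)) (homPTop (Noodles X)),
        homPTop (Noodles X)]
      (fun p : (Noodles X ≃ₜ Noodles X) × (Noodles X ≃ₜ Noodles X) => p.2.trans p.1) := by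
  letI := homPTop (Noodles X)
  refine continuous_induced_rng.2 (continuous_pi fun a => ?_)
  rw [continuous_iff_continuousAt]
  rintro ⟨f₀, g₀⟩
  show Filter.Tendsto (fun p : (Noodles X ≃ₜ Noodles X) × (Noodles X ≃ₜ Noodles X) =>
    p.1 (p.2 a)) (𝓝 (f₀, g₀)) (𝓝 (f₀ (g₀ a)))
  rw [(nhds_basis_opens _).tendsto_right_iff]
  rintro W ⟨hfW, hW⟩
  rw [nhds_prod_eq]
  by_cases ha : a ∈ Arc X
  · have hb := arc_map g₀ ha
    have hc := arc_map f₀ hb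
    obtain ⟨y, s, hy⟩ := pt_surj (f₀ (g₀ a))
    obtain ⟨x, r, hx⟩ := pt_surj (g₀ a)
    rw [hy] at hc hfW
    obtain ⟨d₁, d₂, -, hdW, O, hO, hsO, hOd⟩ := nbhd hc hW hfW
    rw [hx] at hb hy
    obtain ⟨c₁, c₂, hcc, hcO, O', hO', hrO', hOc⟩ :=
      nbhd hb (hO.preimage f₀.continuous) (show f₀ _ ∈ O by rw [hy]; exact hsO)
    have e1 := eval_mem f₀ (noodlePt x c₁) hO (hcO (mem_seg.2 ⟨rfl, le_rfl, hcc⟩))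
    have e2 := eval_mem f₀ (noodlePt x c₂) hO (hcO (mem_seg.2 ⟨rfl, hcc, le_rfl⟩))
    have e3 := eval_mem g₀ a hO' (by rw [hx]; exact hrO')
    filter_upwards [(e1.and e2).prod_mk e3]
    rintro ⟨f, g⟩ ⟨⟨h1, h2⟩, h3⟩
    apply hdW
    obtain ⟨t, ht, h3'⟩ := hOc h3
    obtain ⟨s₁, hs₁, h1'⟩ := hOd h1
    obtain ⟨s₂, hs₂, h2'⟩ := hOd h2
    have hpre : IsPreconnected (f.symm '' seg y (Set.Icc d₁ d₂ ∩ Set.uIcc s₁ s₂)) :=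
      (preconn_seg y ((Set.ordConnected_Icc.inter
        Set.ordConnected_uIcc).isPreconnected)).image _ f.symm.continuous.continuousOn
    have hm := between hpre (u := x) (p := c₁) (q := c₂) (t := t)
      ⟨_, mem_seg.2 ⟨rfl, hs₁, Set.left_mem_uIcc⟩, by
        rw [Homeomorph.symm_apply_eq]; exact h1'⟩
      ⟨_, mem_seg.2 ⟨rfl, hs₂, Set.right_mem_uIcc⟩, by
        rw [Homeomorph.symm_apply_eq]; exact h2'⟩ ht.1 ht.2
    obtain ⟨w, hw, hw'⟩ := hm
    rw [Homeomorph.symm_apply_eq] at hw'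
    show f (g a) ∈ _
    change noodlePt x t = g a at h3'
    rw [← h3', ← hw']
    exact Set.image_mono Set.inter_subset_left hw
  · obtain ⟨z, r, rfl⟩ := pt_surj a
    rw [arc_pt] at ha
    push Not at ha
    obtain ⟨rfl, hz⟩ := ha
    have hP : IsOpen (seg z (Set.Ioi 0)) :=
      isOpen_seg isOpen_Ioi (fun h => absurd (Set.mem_Ioi.1 h) (lt_irrefl _))
    have h1P : noodlePt z 1 ∈ seg z (Set.Ioi 0) := mem_seg.2 ⟨rfl, Set.mem_Ioi.2 zero_lt_one⟩
    have e1 := eval_mem f₀ (g₀ (noodlePt z 0)) hW hfW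
    have e2 := eval_mem g₀ (noodlePt z 1) (hP.preimage g₀.symm.continuous)
      (by show g₀.symm _ ∈ seg z (Set.Ioi 0); rw [g₀.symm_apply_apply]; exact h1P)
    filter_upwards [e1.prod_mk e2]
    rintro ⟨f, g⟩ ⟨h1, h2⟩
    refine spec hz (g₀.trans g.symm) (p := g₀.symm (g (noodlePt z 1))) h2 ?_
      (O := g ⁻¹' (f ⁻¹' W)) ((hW.preimage f.continuous).preimage g.continuous) ?_
    · simpa using h1P
    · simpa using h1
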